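/- arXiv:2107.06620 — 2 statements merged into one kernel-verified Lean document; each statement's English description precedes it below -/
import Mathlib

section
/- For every n ∈ ℤ one has k_ℤ(n) = (√2/π)·1/(n + 1/2) and k̃_ℤ(n) = (2√2/π)·n/(n² − 1/4). Consequently there exists C < ∞ such that |k_ℤ(n)| ≤ C(1+|n|)^{−1}, |k_ℤ(n) − k_ℤ(n+1)| ≤ C(1+|n|)^{−2}, |k̃_ℤ(n)| ≤ C(1+|n|)^{−1} and |k̃_ℤ(n) − k̃_ℤ(n+1)| ≤ C(1+|n|)^{−2} for all n ∈ ℤ. -/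
open MeasureTheory ENNReal Set Function
open scoped NNReal ENNReal Classical

noncomputable section

/-- A homogeneous tree of degree `q+1` with a distinguished end (mythical ancestor),
encoded through its graph distance `dist`, horocyclic level function `level`,
and predecessor map `pred`. -/
structure FlowTree (q : ℕ) where
  V : Type
  countableV : Countable V
  dist : V → V → ℕ
  level : V → ℤ
  pred : V → V
  dist_self : ∀ x, dist x x = 0
  eq_of_dist_eq_zero : ∀ x y, dist x y = 0 → x = y
  dist_comm : ∀ x y, dist x y = dist y x
  dist_triangle : ∀ x y z, dist x z ≤ dist x y + dist y z
  level_pred : ∀ x, level (pred x) = level x + 1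
  succ_finite : ∀ x, Set.Finite {y | pred y = x}
  succ_card : ∀ x, Nat.card {y // pred y = x} = q
  dist_le : ∀ (x y : V) (n m : ℕ), pred^[n] x = pred^[m] y → dist x y ≤ n + m
  dist_spec : ∀ x y, ∃ n m : ℕ, pred^[n] x = pred^[m] y ∧ n + m = dist x y

namespace FlowTree

variable {q : ℕ} (S : FlowTree q)

/-- The canonical flow measure weight `μ(x) = q^{ℓ(x)}`, as an extended nonnegative real. -/
def w (x : S.V) : ℝ≥0∞ := (q : ℝ≥0∞) ^ ((S.level x : ℤ) : ℝ)

/-- The canonical flow measure weight `μ(x) = q^{ℓ(x)}`, as a real number. -/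
def wR (x : S.V) : ℝ := (q : ℝ) ^ (S.level x)

/-- The canonical flow measure of a set `E ⊆ T`. -/
def muS (E : Set S.V) : ℝ≥0∞ := ∑' x : E, S.w x

/-- The `L^p(μ)` (quasi)norm, `p ∈ [1,∞]`. -/
def lpNorm (p : ℝ≥0∞) {E : Type*} [NNNorm E] (f : S.V → E) : ℝ≥0∞ :=
  if p = ∞ then ⨆ x, (‖f x‖₊ : ℝ≥0∞)
  else (∑' x, (‖f x‖₊ : ℝ≥0∞) ^ p.toReal * S.w x) ^ (1 / p.toReal)

/-- The weak `L^{1,∞}(μ)` quasinorm `sup_{λ>0} λ · μ({|f| > λ})`. -/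
def wkNorm {E : Type*} [NNNorm E] (f : S.V → E) : ℝ≥0∞ :=
  ⨆ t : ℝ≥0, (t : ℝ≥0∞) * S.muS {x | t < ‖f x‖₊}

/-- `Σf(x) = f(𝔭(x))`. -/
def sig (f : S.V → ℂ) : S.V → ℂ := fun x => f (S.pred x)

/-- `Σ*f(x) = (1/q) Σ_{y ∈ succ(x)} f(y)`. -/
def sigStar (f : S.V → ℂ) : S.V → ℂ :=
  fun x => (q : ℂ)⁻¹ * ∑' y : {y | S.pred y = x}, f y.1

/-- The flow gradient `∇ = id − Σ`. -/
def grad (f : S.V → ℂ) : S.V → ℂ := fun x => f x - f (S.pred x)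

/-- `∇* = id − Σ*`. -/
def gradStar (f : S.V → ℂ) : S.V → ℂ := fun x => f x - S.sigStar f x

/-- The modulus of the gradient `Df(x) = Σ_{y ∼ x} |f(x) − f(y)|`. -/
def Dmod (f : S.V → ℂ) : S.V → ℝ :=
  fun x => ∑' y : {y | S.dist x y = 1}, ‖f x - f y.1‖

/-- `Σ̃_n = Σ^n` for `n ≥ 0` and `(Σ*)^{−n}` for `n < 0`. -/
def sigTilde (n : ℤ) (f : S.V → ℂ) : S.V → ℂ :=
  if 0 ≤ n then (S.sig)^[n.toNat] f else (S.sigStar)^[(-n).toNat] f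

/-- `Σ*` acting on real-valued functions. -/
def sigStarR (f : S.V → ℝ) : S.V → ℝ :=
  fun x => (q : ℝ)⁻¹ * ∑' y : {y | S.pred y = x}, f y.1

/-- The flow Laplacian `𝓛 = id − (Σ + Σ*)/2`, acting pointwise on real functions. -/
def lapR (f : S.V → ℝ) : S.V → ℝ :=
  fun x => f x - (f (S.pred x) + S.sigStarR f x) / 2

/-- `δ_y/μ(y)`, the normalized delta at `y`. -/
def deltaMu (y : S.V) : S.V → ℝ := fun z => if z = y then (S.wR y)⁻¹ else 0

/-- The heat kernel `H_t(x,y)` of the flow Laplacian, i.e. `(e^{−t𝓛} (δ_y/μ(y)))(x)`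
computed via the exponential power series of the bounded operator `𝓛`. -/
def Hker (t : ℝ) (x y : S.V) : ℝ :=
  ∑' n : ℕ, ((-t) ^ n / (n.factorial : ℝ)) * ((S.lapR)^[n] (S.deltaMu y)) x

/-- The integral kernel `K(x,y)` of `𝓛^{−1/2}`, by subordination. -/
def Kker (x y : S.V) : ℝ :=
  (Real.sqrt Real.pi)⁻¹ * ∫ t in Set.Ioi (0 : ℝ), S.Hker t x y * t ^ (-(1 : ℝ)/2)

/-- The Riesz transform `𝓡 = ∇𝓛^{−1/2}`, defined on finitely supported functions. -/
def riesz (f : S.V → ℂ) : S.V → ℂ :=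
  fun x => ∑' y, ((S.Kker x y - S.Kker (S.pred x) y : ℝ) : ℂ) * f y * (S.wR y : ℂ)

/-- The integral operator with almost-radial kernel `q^{−ℓ(x)/2} G(d(x,y)) q^{−ℓ(y)/2}`. -/
def kernelOp (G : ℕ → ℂ) (f : S.V → ℂ) : S.V → ℂ :=
  fun x => ∑' y, (((q : ℝ) ^ (-((S.level x : ℤ) : ℝ)/2) * (q : ℝ) ^ (-((S.level y : ℤ) : ℝ)/2) : ℝ) : ℂ)
    * G (S.dist x y) * f y * (S.wR y : ℂ)

/-- The ε-horizontal gradient `∇_ε f(x) = (1/q) Σ_{y ∈ succ(x)} ε(y) f(y)`. -/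
def hgrad (ε f : S.V → ℂ) : S.V → ℂ :=
  fun x => (q : ℂ)⁻¹ * ∑' y : {y | S.pred y = x}, ε y.1 * f y.1

/-- The adjoint ε-horizontal gradient `∇_ε* f(x) = conj(ε(x)) f(𝔭(x))`. -/
def hgradStar (ε f : S.V → ℂ) : S.V → ℂ :=
  fun x => (starRingEnd ℂ) (ε x) * f (S.pred x)

/-- `‖ε‖_∞`. -/
def epsSup (ε : S.V → ℂ) : ℝ≥0∞ := ⨆ x, (‖ε x‖₊ : ℝ≥0∞)

/-- The `L²(μ)` inner product. -/
def inner2 (f g : S.V → ℂ) : ℂ := ∑' x, f x * (starRingEnd ℂ) (g x) * (S.wR x : ℂ)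

/-- `y ≤ x` iff `d(x,y) = ℓ(x) − ℓ(y)`. -/
def le' (y x : S.V) : Prop := (S.dist x y : ℤ) = S.level x - S.level y

/-- Admissible trapezoids of `(T,μ)`. -/
def IsAdmissibleTrapezoid (F : Set S.V) : Prop :=
  (∃ x, F = {x}) ∨
  ∃ (x₀ : S.V) (h1 h2 : ℕ), 0 < h1 ∧ 2 * h1 ≤ h2 ∧ h2 ≤ 12 * h1 ∧
    F = {x | S.le' x x₀ ∧ S.level x₀ - (h2 : ℤ) < S.level x ∧ S.level x ≤ S.level x₀ - (h1 : ℤ)}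

/-- `(1,∞)`-atoms of `(T,μ)`. -/
def IsOneInftyAtom (a : S.V → ℂ) : Prop :=
  ∃ F : Set S.V, S.IsAdmissibleTrapezoid F ∧ Function.support a ⊆ F ∧
    (∑' x, a x * (S.wR x : ℂ)) = 0 ∧ ∀ x, (‖a x‖₊ : ℝ≥0∞) ≤ (S.muS F)⁻¹

end FlowTree

namespace ZRiesz

/-- The discrete Laplacian on `ℤ`. -/
def deltaZ (F : ℤ → ℝ) : ℤ → ℝ := fun n => F n - (F (n + 1) + F (n - 1)) / 2

/-- The heat kernel `h_t^ℤ = e^{−tΔ_ℤ} δ_0` on `ℤ`, via the exponential power series. -/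
def heatZ (t : ℝ) (n : ℤ) : ℝ :=
  ∑' k : ℕ, ((-t) ^ k / (k.factorial : ℝ)) *
    (deltaZ^[k] (fun m => if m = 0 then (1 : ℝ) else 0)) n

/-- Kernel of the Riesz transform on `ℤ`: `k_ℤ(n) = π^{−1/2} ∫₀^∞ (∇_ℤ h_t^ℤ)(n) t^{−1/2} dt`. -/
def kZ (n : ℤ) : ℝ :=
  (Real.sqrt Real.pi)⁻¹ * ∫ t in Set.Ioi (0 : ℝ), (heatZ t n - heatZ t (n + 1)) * t ^ (-(1 : ℝ)/2)

/-- Kernel of the skew-symmetric part: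
`k̃_ℤ(n) = π^{−1/2} ∫₀^∞ (∇̃_ℤ h_t^ℤ)(n) t^{−1/2} dt`. -/
def ktZ (n : ℤ) : ℝ :=
  (Real.sqrt Real.pi)⁻¹ *
    ∫ t in Set.Ioi (0 : ℝ), (heatZ t (n - 1) - heatZ t (n + 1)) * t ^ (-(1 : ℝ)/2)

/-- The closed formula `k̃_ℤ(m) = (2√2/π) m/(m² − 1/4)`. -/
def ktZc (m : ℤ) : ℝ := (2 * Real.sqrt 2 / Real.pi) * (m : ℝ) / ((m : ℝ) ^ 2 - 1/4)

/-- `G(n) = Σ_{k≥0} q^{−(n+2k)/2} k̃_ℤ(n+2k+1)` (subordination kernel version). -/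
def Gint (q : ℕ) (n : ℕ) : ℝ :=
  ∑' k : ℕ, (q : ℝ) ^ (-(((n : ℝ)) + 2 * (k : ℝ))/2) * ktZ ((n : ℤ) + 2 * (k : ℤ) + 1)

/-- `G(n) = Σ_{k≥0} q^{−(n+2k)/2} k̃_ℤ(n+2k+1)` (closed formula version). -/
def Gc (q : ℕ) (n : ℕ) : ℝ :=
  ∑' k : ℕ, (q : ℝ) ^ (-(((n : ℝ)) + 2 * (k : ℝ))/2) * ktZc ((n : ℤ) + 2 * (k : ℤ) + 1)

/-- The `ℓ^p(ℤ)` norm. -/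
def zlpNorm (p : ℝ≥0∞) (F : ℤ → ℂ) : ℝ≥0∞ :=
  if p = ∞ then ⨆ n, (‖F n‖₊ : ℝ≥0∞)
  else (∑' n : ℤ, (‖F n‖₊ : ℝ≥0∞) ^ p.toReal) ^ (1 / p.toReal)

/-- The `ℓ^{1,∞}(ℕ)` quasinorm. -/
def natWk (F : ℕ → ℂ) : ℝ≥0∞ :=
  ⨆ t : ℝ≥0, (t : ℝ≥0∞) * ∑' (_ : {n : ℕ | t < ‖F n‖₊}), (1 : ℝ≥0∞)

end ZRiesz

/-- The punctured boundary `Ω = ∂T \ {ω_*}` of the tree, together with the measure `ν`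
with `ν(Ω_x) = q^{ℓ(x)}`.  `vert ω n` is the vertex `ω_n` of level `n` on the geodesic
`[ω, ω_*]`. -/
structure FlowTreeBoundary {q : ℕ} (S : FlowTree q) where
  Ω : Type
  mΩ : MeasurableSpace Ω
  ν : @MeasureTheory.Measure Ω mΩ
  vert : Ω → ℤ → S.V
  level_vert : ∀ ω n, S.level (vert ω n) = n
  pred_vert : ∀ ω n, S.pred (vert ω n) = vert ω (n + 1)
  vert_surj : ∀ x : S.V, ∃ ω, vert ω (S.level x) = x
  vert_inj : ∀ ω ω', (∀ n, vert ω n = vert ω' n) → ω = ω'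
  meas_cone : ∀ x : S.V, @MeasurableSet Ω mΩ {ω | vert ω (S.level x) = x}
  nu_cone : ∀ x : S.V, ν {ω | vert ω (S.level x) = x} = (q : ℝ≥0∞) ^ ((S.level x : ℤ) : ℝ)

attribute [instance] FlowTreeBoundary.mΩ

namespace FlowTreeBoundary

variable {q : ℕ} {S : FlowTree q} (B : FlowTreeBoundary S)

/-- The product measure `ν × #` on `Ω × ℤ`. -/
def pm : MeasureTheory.Measure (B.Ω × ℤ) := B.ν.prod MeasureTheory.Measure.count

/-- `Ω_x = {ω : x ∈ [ω, ω_*]}`. -/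
def cone (x : S.V) : Set B.Ω := {ω | B.vert ω (S.level x) = x}

/-- The lifting operator `Φf(ω,n) = f(ω_n)`. -/
def lift (f : S.V → ℂ) : B.Ω × ℤ → ℂ := fun p => f (B.vert p.1 p.2)

/-- The lifting operator on `ℝ≥0∞`-valued functions. -/
def liftNN (f : S.V → ℝ≥0∞) : B.Ω × ℤ → ℝ≥0∞ := fun p => f (B.vert p.1 p.2)

/-- The adjoint `Φ*g(x) = ν(Ω_x)^{−1} ∫_{Ω_x} g(ω, ℓ(x)) dν(ω)`. -/
def liftStar (g : B.Ω × ℤ → ℂ) : S.V → ℂ :=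
  fun x => ((B.ν (B.cone x)).toReal)⁻¹ * ∫ ω in B.cone x, g (ω, S.level x) ∂B.ν

/-- The adjoint `Φ*` on `ℝ≥0∞`-valued functions. -/
def liftStarNN (g : B.Ω × ℤ → ℝ≥0∞) : S.V → ℝ≥0∞ :=
  fun x => (B.ν (B.cone x))⁻¹ * ∫⁻ ω in B.cone x, g (ω, S.level x) ∂B.ν

end FlowTreeBoundary

/-- The weak `L^{1,∞}(μ)` quasinorm with respect to a measure. -/
def wkMeas {α : Type*} [MeasurableSpace α] (μ : MeasureTheory.Measure α) (g : α → ℂ) : ℝ≥0∞ :=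
  ⨆ t : ℝ≥0, (t : ℝ≥0∞) * μ {a | t < ‖g a‖₊}

/-- The weak `L^{1,∞}(μ)` quasinorm for `ℝ≥0∞`-valued functions. -/
def wkMeasNN {α : Type*} [MeasurableSpace α] (μ : MeasureTheory.Measure α) (g : α → ℝ≥0∞) :
    ℝ≥0∞ :=
  ⨆ t : ℝ≥0, (t : ℝ≥0∞) * μ {a | (t : ℝ≥0∞) < g a}

end

/-!
The Fourier transform turns `Δ_ℤ` into multiplication by `1 - cos θ` and `δ_0` into `1`, so
`h_t^ℤ(n)` is the `n`-th cosine coefficient of `exp (-(1 - cos θ) t)`. On the Fourier side the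
gradient contributes `cos (n θ) - cos ((n + 1) θ) = √(1 - cos θ) · √2 sin ((n + 1/2) θ)`, and the
subordination integral cancels the factor `√(1 - cos θ)`. What is left is
`(√2 / π) ∫₀^π sin ((n + 1/2) θ) dθ`. The skew-symmetric kernel is the sum of two consecutive values
of `k_ℤ`, because `∇̃_ℤ` is the sum of two translates of `∇_ℤ`; it inherits the estimates of `k_ℤ`.
-/

namespace ZRiesz

open Real

section ExponentialSeries

variable {α E : Type*} [MeasurableSpace α] {μ : Measure α} [NormedAddCommGroup E]
  [NormedSpace ℝ E] {φ : α → ℝ} {g : α → E} {M : ℝ}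

theorem hasSum_integral_pow_div_factorial_smul (hφ : AEStronglyMeasurable φ μ)
    (hM : ∀ᵐ x ∂μ, |φ x| ≤ M) (hg : Integrable g μ) :
    HasSum (fun k : ℕ => ∫ x, (φ x ^ k / k.factorial) • g x ∂μ) (∫ x, exp (φ x) • g x ∂μ) := by
  refine hasSum_integral_of_dominated_convergence (fun k x => M ^ k / k.factorial * ‖g x‖)
    (fun k => ((hφ.pow k).mul_const _).smul hg.1) (fun k => ?_) ?_ ?_ ?_
  · filter_upwards [hM] with x hx
    rw [norm_smul, norm_div, norm_pow, Real.norm_eq_abs, Real.norm_natCast]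
    gcongr
  · exact .of_forall fun x => (summable_pow_div_factorial M).mul_right _
  · simpa only [tsum_mul_right] using hg.norm.const_mul _
  · refine .of_forall fun x => ?_
    rw [exp_eq_exp_ℝ]
    exact (NormedSpace.expSeries_div_hasSum_exp (φ x)).smul_const _

end ExponentialSeries

section CosineCoefficients

/-- The `n`-th Fourier coefficient of the even `2π`-periodic function that agrees with `g` on
`(0, π]`. It diagonalizes `deltaZ` on even functions of `ℤ`. -/
noncomputable def cosCoeff (g : ℝ → ℝ) (n : ℤ) : ℝ :=
  π⁻¹ * ∫ θ in Ioc 0 π, g θ * cos (n * θ)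

variable {g : ℝ → ℝ}

theorem integrableOn_mul_cos {s : Set ℝ} (hg : IntegrableOn g s) (x : ℝ) :
    IntegrableOn (fun θ => g θ * cos (x * θ)) s :=
  Integrable.mul_bdd (c := 1) hg (by fun_prop) (.of_forall fun θ => abs_cos_le_one (x * θ))

theorem integrableOn_one_sub_cos_pow_mul (hg : IntegrableOn g (Ioc 0 π)) (k : ℕ) :
    IntegrableOn (fun θ => (1 - cos θ) ^ k * g θ) (Ioc 0 π) :=
  hg.continuousOn_mul_of_subset (by fun_prop) isCompact_Icc measurableSet_Ioc
    Ioc_subset_Icc_self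

theorem cosCoeff_one : cosCoeff (fun _ => 1) = fun n => if n = 0 then 1 else 0 := by
  funext n
  simp only [cosCoeff, one_mul]
  rw [← intervalIntegral.integral_of_le pi_nonneg]
  split_ifs with h
  · simp [h, pi_ne_zero]
  · have hn : (n : ℝ) ≠ 0 := mod_cast h
    rw [intervalIntegral.integral_comp_mul_left cos hn]
    simp [sin_int_mul_pi]

theorem deltaZ_cosCoeff (hg : IntegrableOn g (Ioc 0 π)) :
    deltaZ (cosCoeff g) = cosCoeff (fun θ => (1 - cos θ) * g θ) := by
  funext n
  have hi (m : ℤ) := integrableOn_mul_cos hg m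
  have hi_add : IntegrableOn
      (fun θ => g θ * cos ((n + 1 : ℤ) * θ) + g θ * cos ((n - 1 : ℤ) * θ)) (Ioc 0 π) :=
    (hi _).add (hi _)
  have cos_shift (θ : ℝ) : (1 - cos θ) * g θ * cos (n * θ) =
      g θ * cos (n * θ) -
        (g θ * cos ((n + 1 : ℤ) * θ) + g θ * cos ((n - 1 : ℤ) * θ)) / 2 := by
    push_cast
    rw [add_mul (n : ℝ), sub_mul (n : ℝ), one_mul, cos_add, cos_sub]
    ring
  simp only [deltaZ, cosCoeff, cos_shift]
  rw [integral_sub (hi n) (hi_add.div_const 2), integral_div, integral_add (hi _) (hi _)]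
  ring

theorem deltaZ_iterate_cosCoeff (hg : IntegrableOn g (Ioc 0 π)) (k : ℕ) :
    deltaZ^[k] (cosCoeff g) = cosCoeff (fun θ => (1 - cos θ) ^ k * g θ) := by
  induction k with
  | zero => simp
  | succ k ih =>
    rw [iterate_succ_apply', ih, deltaZ_cosCoeff (integrableOn_one_sub_cos_pow_mul hg k)]
    simp only [pow_succ', mul_assoc]

theorem hasSum_deltaZ_iterate_cosCoeff (hg : IntegrableOn g (Ioc 0 π)) (t : ℝ) (n : ℤ) :
    HasSum (fun k : ℕ => (-t) ^ k / k.factorial * deltaZ^[k] (cosCoeff g) n)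
      (cosCoeff (fun θ => exp (-((1 - cos θ) * t)) * g θ) n) := by
  have symbol_bound (θ : ℝ) : |-((1 - cos θ) * t)| ≤ 2 * |t| := by
    rw [abs_neg, abs_mul]
    gcongr
    exact abs_le.2 ⟨by linarith [cos_le_one θ], by linarith [neg_one_le_cos θ]⟩
  have h := (hasSum_integral_pow_div_factorial_smul (φ := fun θ => -((1 - cos θ) * t))
    (by fun_prop) (.of_forall symbol_bound) (integrableOn_mul_cos hg n)).mul_left π⁻¹
  simp only [smul_eq_mul, ← mul_assoc] at h
  simp only [deltaZ_iterate_cosCoeff hg]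
  refine h.congr_fun fun k => ?_
  rw [cosCoeff, mul_left_comm, ← integral_const_mul]
  congr 2
  funext θ
  rw [← mul_neg, mul_pow]
  ring

theorem heatZ_eq_cosCoeff (t : ℝ) : heatZ t = cosCoeff (fun θ => exp (-((1 - cos θ) * t))) := by
  funext n
  rw [heatZ, ← cosCoeff_one]
  simpa using (hasSum_deltaZ_iterate_cosCoeff (g := fun _ => 1) (by simp) t n).tsum_eq

end CosineCoefficients

section Subordination

/-- The density in `t` of the Gamma distribution of shape `s` and rate `r`, without its normalizing
factor `1 / Γ(s)`. Its total mass does not depend on `r`, which is subordination for `r ^ (-s)`. -/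
noncomputable def gammaWeight (s r t : ℝ) : ℝ := t ^ (s - 1) * exp (-(r * t)) * r ^ s

variable {s r t : ℝ}

theorem gammaWeight_nonneg (hr : 0 ≤ r) (ht : 0 ≤ t) : 0 ≤ gammaWeight s r t := by
  unfold gammaWeight
  positivity

theorem integral_gammaWeight (hs : 0 < s) (hr : 0 < r) :
    ∫ t in Ioi 0, gammaWeight s r t = Gamma s := by
  have hrs : r ^ s ≠ 0 := (rpow_pos_of_pos hr s).ne'
  simp only [gammaWeight]
  rw [integral_mul_const, integral_rpow_mul_exp_neg_mul_Ioi hs hr, one_div, inv_rpow hr.le]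
  field_simp

theorem integrableOn_gammaWeight (hs : 0 < s) (hr : 0 < r) :
    IntegrableOn (gammaWeight s r) (Ioi 0) :=
  .of_integral_ne_zero <| by
    rw [integral_gammaWeight hs hr]
    exact (Gamma_pos_of_pos hs).ne'

variable {α E : Type*} [MeasurableSpace α] {μ : Measure α} [NormedAddCommGroup E]
  [NormedSpace ℝ E] {ρ : α → ℝ} {g : α → E}

theorem integrable_gammaWeight_smul (hs : 0 < s) (hρ : AEMeasurable ρ μ)
    (hρ_pos : ∀ᵐ x ∂μ, 0 < ρ x) (hg : Integrable g μ) :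
    Integrable (fun p : α × ℝ => gammaWeight s (ρ p.1) p.2 • g p.1)
      (μ.prod (volume.restrict (Ioi 0))) := by
  have hmeas : AEStronglyMeasurable (fun p : α × ℝ => gammaWeight s (ρ p.1) p.2 • g p.1)
      (μ.prod (volume.restrict (Ioi 0))) := by
    have : AEMeasurable (fun p : α × ℝ => ρ p.1) (μ.prod (volume.restrict (Ioi 0))) :=
      hρ.comp_fst
    refine AEStronglyMeasurable.smul ?_ hg.1.comp_fst
    unfold gammaWeight
    exact AEMeasurable.aestronglyMeasurable (by fun_prop)
  refine (integrable_prod_iff hmeas).2 ⟨?_, ?_⟩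
  · filter_upwards [hρ_pos] with x hx
    exact (integrableOn_gammaWeight hs hx).smul_const (g x)
  · refine (hg.norm.const_mul (Gamma s)).congr ?_
    filter_upwards [hρ_pos] with x hx
    rw [← integral_gammaWeight hs hx, ← integral_mul_const]
    refine setIntegral_congr_fun measurableSet_Ioi fun t ht => ?_
    simp only [norm_smul, norm_of_nonneg (gammaWeight_nonneg hx.le (mem_Ioi.1 ht).le)]

theorem integrableOn_integral_gammaWeight_smul [SFinite μ] (hs : 0 < s)
    (hρ : AEMeasurable ρ μ) (hρ_pos : ∀ᵐ x ∂μ, 0 < ρ x) (hg : Integrable g μ) :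
    IntegrableOn (fun t => ∫ x, gammaWeight s (ρ x) t • g x ∂μ) (Ioi 0) :=
  (integrable_gammaWeight_smul hs hρ hρ_pos hg).integral_prod_right

theorem integral_integral_gammaWeight_smul [SFinite μ] [CompleteSpace E] (hs : 0 < s)
    (hρ : AEMeasurable ρ μ) (hρ_pos : ∀ᵐ x ∂μ, 0 < ρ x) (hg : Integrable g μ) :
    ∫ t in Ioi 0, ∫ x, gammaWeight s (ρ x) t • g x ∂μ = Gamma s • ∫ x, g x ∂μ := by
  rw [← integral_integral_swap (integrable_gammaWeight_smul hs hρ hρ_pos hg), ← integral_smul]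
  refine integral_congr_ae ?_
  filter_upwards [hρ_pos] with x hx
  rw [integral_smul_const, integral_gammaWeight hs hx]

end Subordination

section ClosedFormulas

theorem sqrt_one_sub_cos {θ : ℝ} (h₀ : 0 ≤ θ) (h₂ : θ ≤ 2 * π) :
    √(1 - cos θ) = √2 * sin (θ / 2) := by
  rw [sin_half_eq_sqrt h₀ h₂, ← sqrt_mul zero_le_two, mul_div_cancel₀ _ two_ne_zero]

theorem cos_mul_sub_cos_add_one_mul {θ : ℝ} (h₀ : 0 ≤ θ) (h₂ : θ ≤ 2 * π) (x : ℝ) :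
    cos (x * θ) - cos ((x + 1) * θ) = √(1 - cos θ) * (√2 * sin ((x + 1 / 2) * θ)) := by
  have half_angle : (x * θ - (x + 1) * θ) / 2 = -(θ / 2) := by ring
  have midpoint : (x * θ + (x + 1) * θ) / 2 = (x + 1 / 2) * θ := by ring
  rw [sqrt_one_sub_cos h₀ h₂, cos_sub_cos, half_angle, midpoint, sin_neg, mul_mul_mul_comm,
    mul_self_sqrt zero_le_two]
  ring

theorem one_sub_cos_pos {θ : ℝ} (hθ : θ ∈ Ioc 0 π) : 0 < 1 - cos θ := by
  have := cos_lt_cos_of_nonneg_of_le_pi le_rfl hθ.2 hθ.1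
  rw [cos_zero] at this
  linarith

theorem ae_one_sub_cos_pos : ∀ᵐ θ ∂volume.restrict (Ioc 0 π), 0 < 1 - cos θ :=
  ae_restrict_of_forall_mem measurableSet_Ioc fun _ => one_sub_cos_pos

theorem integrableOn_sqrt_two_mul_sin (x : ℝ) :
    IntegrableOn (fun θ => √2 * sin (x * θ)) (Ioc 0 π) :=
  (Continuous.integrableOn_Icc (by fun_prop)).mono_set Ioc_subset_Icc_self

theorem heatZ_sub_mul_rpow (n : ℤ) (t : ℝ) :
    (heatZ t n - heatZ t (n + 1)) * t ^ (-(1 : ℝ) / 2) = π⁻¹ * ∫ θ in Ioc 0 π,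
      gammaWeight (1 / 2) (1 - cos θ) t * (√2 * sin ((n + 1 / 2) * θ)) := by
  have hexp : IntegrableOn (fun θ => exp (-((1 - cos θ) * t))) (Ioc 0 π) :=
    (Continuous.integrableOn_Icc (by fun_prop)).mono_set Ioc_subset_Icc_self
  rw [heatZ_eq_cosCoeff, cosCoeff, cosCoeff, ← mul_sub,
    ← integral_sub (integrableOn_mul_cos hexp _) (integrableOn_mul_cos hexp _), mul_assoc,
    ← integral_mul_const]
  congr 1
  refine setIntegral_congr_fun measurableSet_Ioc fun θ hθ => ?_
  have gradient_symbol := cos_mul_sub_cos_add_one_mul hθ.1.le (by linarith [hθ.2, pi_pos]) n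
  have exponent : -(1 : ℝ) / 2 = 1 / 2 - 1 := by norm_num
  simp only [← mul_sub, gammaWeight, ← sqrt_eq_rpow, exponent]
  push_cast
  rw [gradient_symbol]
  ring

theorem integrableOn_heatZ_sub_mul_rpow (n : ℤ) :
    IntegrableOn (fun t => (heatZ t n - heatZ t (n + 1)) * t ^ (-(1 : ℝ) / 2)) (Ioi 0) := by
  simp only [heatZ_sub_mul_rpow]
  exact (integrableOn_integral_gammaWeight_smul one_half_pos (by fun_prop) ae_one_sub_cos_pos
    (integrableOn_sqrt_two_mul_sin _)).const_mul _

theorem intCast_add_half_ne_zero (n : ℤ) : (n : ℝ) + 1 / 2 ≠ 0 := by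
  intro h
  have : (2 * n + 1 : ℝ) = 0 := by linarith
  norm_cast at this
  lia

theorem integral_sin_intCast_add_half_mul (n : ℤ) :
    ∫ θ in Ioc 0 π, sin ((n + 1 / 2) * θ) = ((n : ℝ) + 1 / 2)⁻¹ := by
  rw [← intervalIntegral.integral_of_le pi_nonneg,
    intervalIntegral.integral_comp_mul_left sin (intCast_add_half_ne_zero n), integral_sin,
    add_mul (n : ℝ) (1 / 2) π, one_div_mul_eq_div, cos_add_pi_div_two, sin_int_mul_pi]
  simp

theorem kZ_eq (n : ℤ) : kZ n = √2 / π * ((n : ℝ) + 1 / 2)⁻¹ := by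
  have subordination := integral_integral_gammaWeight_smul one_half_pos (by fun_prop)
    ae_one_sub_cos_pos (integrableOn_sqrt_two_mul_sin (n + 1 / 2))
  simp only [smul_eq_mul, Gamma_one_half_eq] at subordination
  simp only [kZ, heatZ_sub_mul_rpow]
  rw [integral_const_mul, subordination, integral_const_mul, integral_sin_intCast_add_half_mul]
  field_simp

theorem ktZ_eq_kZ_add_kZ (n : ℤ) : ktZ n = kZ (n - 1) + kZ n := by
  have h := integrableOn_heatZ_sub_mul_rpow (n - 1)
  rw [sub_add_cancel] at h
  rw [ktZ, kZ, kZ, ← mul_add, sub_add_cancel,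
    ← integral_add h (integrableOn_heatZ_sub_mul_rpow n)]
  simp only [← add_mul, sub_add_sub_cancel]

theorem ktZ_eq (n : ℤ) : ktZ n = 2 * √2 / π * (n : ℝ) / ((n : ℝ) ^ 2 - 1 / 4) := by
  have h₁ := intCast_add_half_ne_zero n
  have h₂ := intCast_add_half_ne_zero (n - 1)
  have factorization : (n : ℝ) ^ 2 - 1 / 4 = ((n - 1 : ℤ) + 1 / 2) * (n + 1 / 2) := by
    push_cast
    ring
  rw [ktZ_eq_kZ_add_kZ, kZ_eq, kZ_eq, factorization, ← mul_add, inv_add_inv h₂ h₁]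
  push_cast
  ring

end ClosedFormulas

/-- The standard estimates for a Calderón–Zygmund convolution kernel on `ℤ`, size and first
difference, with one common constant `C`. -/
structure IsCalderonZygmund (C : ℝ) (k : ℤ → ℝ) : Prop where
  abs_le (n : ℤ) : |k n| ≤ C * (1 + |(n : ℝ)|)⁻¹
  abs_sub_le (n : ℤ) : |k n - k (n + 1)| ≤ C * ((1 + |(n : ℝ)|) ^ 2)⁻¹

theorem inv_one_add_abs_sub_le (x y : ℝ) : (1 + |x - y|)⁻¹ ≤ (1 + |y|) * (1 + |x|)⁻¹ := by
  have triangle : |x| ≤ |x - y| + |y| := by simpa using abs_add_le (x - y) y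
  rw [← div_eq_mul_inv, inv_le_comm₀ (by positivity) (by positivity), inv_div,
    div_le_iff₀' (by positivity)]
  linarith [mul_nonneg (abs_nonneg y) (abs_nonneg (x - y))]

theorem add_ne_zero_of_one_add_abs_le {x a c : ℝ} (h : 1 + |x| ≤ c * |x + a|) :
    x + a ≠ 0 := by
  intro h₀
  rw [h₀, abs_zero, mul_zero] at h
  linarith [abs_nonneg x]

theorem inv_abs_add_le {x a c : ℝ} (h : 1 + |x| ≤ c * |x + a|) :
    |x + a|⁻¹ ≤ c * (1 + |x|)⁻¹ := by
  rwa [← div_eq_mul_inv, le_div_iff₀ (by positivity),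
    inv_mul_le_iff₀ (abs_pos.2 (add_ne_zero_of_one_add_abs_le h)), mul_comm]

namespace IsCalderonZygmund

variable {C C' a c : ℝ} {k k' : ℤ → ℝ}

theorem const_nonneg (hk : IsCalderonZygmund C k) : 0 ≤ C := by
  simpa using (abs_nonneg _).trans (hk.abs_le 0)

theorem mono (hk : IsCalderonZygmund C k) (hC : C ≤ C') : IsCalderonZygmund C' k where
  abs_le n := (hk.abs_le n).trans (by gcongr)
  abs_sub_le n := (hk.abs_sub_le n).trans (by gcongr)

theorem add (hk : IsCalderonZygmund C k) (hk' : IsCalderonZygmund C' k') :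
    IsCalderonZygmund (C + C') (fun n => k n + k' n) where
  abs_le n := by
    rw [add_mul]
    exact (abs_add_le _ _).trans (add_le_add (hk.abs_le n) (hk'.abs_le n))
  abs_sub_le n := by
    rw [add_mul, add_sub_add_comm]
    exact (abs_add_le _ _).trans (add_le_add (hk.abs_sub_le n) (hk'.abs_sub_le n))

theorem const_mul (b : ℝ) (hk : IsCalderonZygmund C k) :
    IsCalderonZygmund (|b| * C) (fun n => b * k n) where
  abs_le n := by
    rw [abs_mul, mul_assoc]
    exact mul_le_mul_of_nonneg_left (hk.abs_le n) (abs_nonneg b)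
  abs_sub_le n := by
    rw [← mul_sub, abs_mul, mul_assoc]
    exact mul_le_mul_of_nonneg_left (hk.abs_sub_le n) (abs_nonneg b)

theorem comp_sub_right (hk : IsCalderonZygmund C k) (m : ℤ) :
    IsCalderonZygmund (C * (1 + |(m : ℝ)|) ^ 2) (fun n => k (n - m)) := by
  have hC := hk.const_nonneg
  have decay (n : ℤ) :
      (1 + |((n - m : ℤ) : ℝ)|)⁻¹ ≤ (1 + |(m : ℝ)|) * (1 + |(n : ℝ)|)⁻¹ := by
    rw [Int.cast_sub]
    exact inv_one_add_abs_sub_le n m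
  constructor
  · intro n
    calc |k (n - m)| ≤ C * (1 + |((n - m : ℤ) : ℝ)|)⁻¹ := hk.abs_le _
      _ ≤ C * ((1 + |(m : ℝ)|) * (1 + |(n : ℝ)|)⁻¹) := by gcongr; exact decay n
      _ ≤ C * ((1 + |(m : ℝ)|) ^ 2 * (1 + |(n : ℝ)|)⁻¹) := by
        gcongr
        exact le_self_pow₀ (by simp) two_ne_zero
      _ = _ := by ring
  · intro n
    rw [add_sub_right_comm]
    calc |k (n - m) - k (n - m + 1)| ≤ C * ((1 + |((n - m : ℤ) : ℝ)|)⁻¹) ^ 2 := by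
          rw [inv_pow]
          exact hk.abs_sub_le _
      _ ≤ C * ((1 + |(m : ℝ)|) * (1 + |(n : ℝ)|)⁻¹) ^ 2 := by gcongr; exact decay n
      _ = _ := by rw [mul_pow, inv_pow, mul_assoc]

theorem inv_intCast_add (h : ∀ n : ℤ, 1 + |(n : ℝ)| ≤ c * |n + a|) :
    IsCalderonZygmund (max c (2 * c ^ 2)) (fun n => (n + a)⁻¹) := by
  have hc : 0 ≤ c := by
    simpa using (inv_nonneg.2 (abs_nonneg _)).trans (inv_abs_add_le (h 0))
  constructor
  · intro n
    rw [abs_inv]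
    exact (inv_abs_add_le (h n)).trans (by gcongr; exact le_max_left _ _)
  · intro n
    have difference : ((n : ℝ) + a)⁻¹ - ((n + 1 : ℤ) + a)⁻¹ =
        ((n : ℝ) + a)⁻¹ * ((n + 1 : ℤ) + a)⁻¹ := by
      rw [inv_sub_inv (add_ne_zero_of_one_add_abs_le (h n))
        (add_ne_zero_of_one_add_abs_le (h (n + 1))), div_eq_mul_inv, mul_inv]
      push_cast
      ring
    calc |((n : ℝ) + a)⁻¹ - ((n + 1 : ℤ) + a)⁻¹|
        = |(n : ℝ) + a|⁻¹ * |((n + 1 : ℤ) : ℝ) + a|⁻¹ := by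
          rw [difference, abs_mul, abs_inv, abs_inv]
      _ ≤ (c * (1 + |(n : ℝ)|)⁻¹) * (c * (1 + |((n + 1 : ℤ) : ℝ)|)⁻¹) := by
          gcongr
          exacts [inv_abs_add_le (h n), inv_abs_add_le (h (n + 1))]
      _ ≤ (c * (1 + |(n : ℝ)|)⁻¹) * (c * (2 * (1 + |(n : ℝ)|)⁻¹)) := by
          gcongr
          simpa [one_add_one_eq_two] using inv_one_add_abs_sub_le n (-1)
      _ = 2 * c ^ 2 * ((1 + |(n : ℝ)|) ^ 2)⁻¹ := by rw [← inv_pow]; ring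
      _ ≤ max c (2 * c ^ 2) * ((1 + |(n : ℝ)|) ^ 2)⁻¹ := by
          gcongr
          exact le_max_right _ _

end IsCalderonZygmund

theorem one_add_abs_intCast_le_abs_add_half (n : ℤ) : 1 + |(n : ℝ)| ≤ 4 * |(n : ℝ) + 1 / 2| := by
  rcases le_or_gt 0 n with hn | hn
  · have : (0 : ℝ) ≤ n := mod_cast hn
    rw [abs_of_nonneg this, abs_of_nonneg (by linarith)]
    linarith
  · have : (n : ℝ) ≤ -1 := mod_cast Int.le_sub_one_of_lt hn
    rw [abs_of_nonpos (by linarith), abs_of_nonpos (by linarith)]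
    linarith

theorem isCalderonZygmund_kZ : IsCalderonZygmund (32 * (√2 / π)) kZ := by
  have h :=
    (IsCalderonZygmund.inv_intCast_add one_add_abs_intCast_le_abs_add_half).const_mul (√2 / π)
  simp only [← kZ_eq] at h
  refine h.mono (le_of_eq ?_)
  rw [abs_of_nonneg (by positivity), max_eq_right (by norm_num)]
  ring

theorem isCalderonZygmund_ktZ : IsCalderonZygmund (160 * (√2 / π)) ktZ := by
  have h := (isCalderonZygmund_kZ.comp_sub_right 1).add isCalderonZygmund_kZ
  simp only [← ktZ_eq_kZ_add_kZ] at h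
  refine h.mono (le_of_eq ?_)
  norm_num
  ring

end ZRiesz

open ZRiesz in
/-- explicit formulas for the convolution kernels `k_ℤ` and `k̃_ℤ` of the Riesz
transform on `ℤ` and of its skew-symmetric part, and the resulting Calderón–Zygmund
estimates. -/
theorem rieszZ_kernel_formulas :
    (∀ n : ℤ, kZ n = Real.sqrt 2 / Real.pi * ((n : ℝ) + 1/2)⁻¹) ∧
    (∀ n : ℤ, ktZ n = 2 * Real.sqrt 2 / Real.pi * (n : ℝ) / ((n : ℝ) ^ 2 - 1/4)) ∧
    ∃ C : ℝ, 0 < C ∧ ∀ n : ℤ,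
      |kZ n| ≤ C * (1 + |(n : ℝ)|)⁻¹ ∧
      |kZ n - kZ (n + 1)| ≤ C * ((1 + |(n : ℝ)|) ^ 2)⁻¹ ∧
      |ktZ n| ≤ C * (1 + |(n : ℝ)|)⁻¹ ∧
      |ktZ n - ktZ (n + 1)| ≤ C * ((1 + |(n : ℝ)|) ^ 2)⁻¹ := by
  have hk : IsCalderonZygmund (160 * (√2 / Real.pi)) kZ :=
    isCalderonZygmund_kZ.mono (by gcongr; norm_num)
  have hkt := isCalderonZygmund_ktZ
  exact ⟨kZ_eq, ktZ_eq, 160 * (√2 / Real.pi), by positivity, fun n =>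
    ⟨hk.abs_le n, hk.abs_sub_le n, hkt.abs_le n, hkt.abs_sub_le n⟩⟩
end

section
/- Let p ∈ [1,∞] and let k ∈ Cv^p(ℤ) be an ℓ^p-convolutor of ℤ. Then the operator 𝒦f = Σ_{n∈ℤ} k(n) Σ̃_{−n} f, which for each finitely supported f : T → ℂ and each vertex x is a sum with only finitely many nonzero terms, satisfies ‖𝒦f‖_{L^p(μ)} ≤ ‖k‖_{Cv^p} · ‖f‖_{L^p(μ)} for all finitely supported f; hence 𝒦 extends to a bounded operator on L^p(μ) with norm at most ‖k‖_{Cv^p}. -/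
open MeasureTheory ENNReal Set Function
open scoped NNReal ENNReal Classical

/-!
Cut the tree at a level `a` below both the support of `f` and a given finite set of vertices. Every
vertex `v` of level `a` starts a ray `v, 𝔭(v), 𝔭²(v), …`, a copy of `ℕ`, and a vertex `x` of level
`a + j` lies on the `q ^ j` rays issued from its descendants of level `a`. Since `Σ*Σ = id`, the
value `𝒦f(x)` is the average over these rays of the convolution of `k` with `f` along the ray. As
each ray carries the mass `q ^ a`, the `L^p(μ)` norm above level `a` is an `ℓ^p` sum over rays of
`ℓ^p(ℤ)` norms, and the convolutor bound applies on each ray; the average costs nothing, by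
convexity.
-/

open scoped BigOperators

lemma rpow_one_div_le_mul_rpow_one_div_iff {r : ℝ} (hr : 0 < r) {A B C : ℝ≥0∞} :
    A ^ (1 / r) ≤ C * B ^ (1 / r) ↔ A ≤ C ^ r * B := by
  rw [one_div, ENNReal.rpow_inv_le_iff hr, ENNReal.mul_rpow_of_nonneg _ _ hr.le,
    ENNReal.rpow_inv_rpow hr.ne']

section Average

variable {ι E : Type*} [NormedAddCommGroup E] [NormedSpace ℝ E] [Module ℚ≥0 E]

lemma enorm_expect_le_sum (s : Finset ι) (g : ι → E) :
    ‖𝔼 i ∈ s, g i‖ₑ ≤ ∑ i ∈ s, (s.card : ℝ≥0∞)⁻¹ * ‖g i‖ₑ := by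
  obtain rfl | hs := s.eq_empty_or_nonempty
  · simp
  have hcard : (s.card : ℝ) ≠ 0 := by exact_mod_cast hs.card_ne_zero
  rw [Finset.expect, ← NNRat.cast_smul_eq_nnqsmul ℝ, enorm_smul, NNRat.cast_inv,
    NNRat.cast_natCast, enorm_inv hcard, Real.enorm_natCast, ← Finset.mul_sum]
  gcongr
  exact enorm_sum_le s g

lemma enorm_expect_le {s : Finset ι} {g : ι → E} {B : ℝ≥0∞}
    (hg : ∀ i ∈ s, ‖g i‖ₑ ≤ B) : ‖𝔼 i ∈ s, g i‖ₑ ≤ B :=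
  calc ‖𝔼 i ∈ s, g i‖ₑ
      ≤ ∑ i ∈ s, (s.card : ℝ≥0∞)⁻¹ * ‖g i‖ₑ := enorm_expect_le_sum s g
    _ ≤ ∑ _i ∈ s, (s.card : ℝ≥0∞)⁻¹ * B := by gcongr with i hi; exact hg i hi
    _ = s.card * (s.card : ℝ≥0∞)⁻¹ * B := by rw [Finset.sum_const, nsmul_eq_mul, mul_assoc]
    _ ≤ B := mul_le_of_le_one_left' (ENNReal.mul_inv_le_one _)

lemma card_mul_enorm_expect_rpow_le (s : Finset ι) (g : ι → E) {r : ℝ} (hr : 1 ≤ r) :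
    s.card * ‖𝔼 i ∈ s, g i‖ₑ ^ r ≤ ∑ i ∈ s, ‖g i‖ₑ ^ r := by
  obtain rfl | hs := s.eq_empty_or_nonempty
  · simp
  have hcancel : (s.card : ℝ≥0∞) * (s.card : ℝ≥0∞)⁻¹ = 1 :=
    ENNReal.mul_inv_cancel (by exact_mod_cast hs.card_ne_zero) (ENNReal.natCast_ne_top _)
  calc s.card * ‖𝔼 i ∈ s, g i‖ₑ ^ r
      ≤ s.card * (∑ i ∈ s, (s.card : ℝ≥0∞)⁻¹ * ‖g i‖ₑ) ^ r := by
        gcongr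
        exact enorm_expect_le_sum s g
    _ ≤ s.card * ∑ i ∈ s, (s.card : ℝ≥0∞)⁻¹ * ‖g i‖ₑ ^ r := by
        gcongr
        refine ENNReal.rpow_arith_mean_le_arith_mean_rpow _ _ _ ?_ hr
        rw [Finset.sum_const, nsmul_eq_mul, hcancel]
    _ = ∑ i ∈ s, ‖g i‖ₑ ^ r := by rw [← Finset.mul_sum, ← mul_assoc, hcancel, one_mul]

end Average

namespace ZRiesz

/-- The convolution `F ∗ k` on `ℤ`, with the sum understood as zero where it does not converge. -/
noncomputable def conv (F k : ℤ → ℂ) (n : ℤ) : ℂ := ∑' m : ℤ, F m * k (n - m)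

lemma conv_eq_tsum_mul_sub (F k : ℤ → ℂ) (n : ℤ) : conv F k n = ∑' m : ℤ, k m * F (n - m) := by
  rw [conv, ← (Equiv.subLeft n).tsum_eq]
  simp [mul_comm]

lemma summable_mul_sub (k : ℤ → ℂ) {F : ℤ → ℂ} (hF : (support F).Finite) (n : ℤ) :
    Summable fun m : ℤ => k m * F (n - m) :=
  summable_of_hasFiniteSupport <| (hF.preimage (sub_right_injective (b := n)).injOn).subset
    fun _ hm => right_ne_zero_of_mul hm

lemma tsum_mul_expect_sub {ι : Type*} (s : Finset ι) (k : ℤ → ℂ) {F : ι → ℤ → ℂ}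
    (hF : ∀ i ∈ s, (support (F i)).Finite) (n : ℤ) :
    ∑' m : ℤ, k m * 𝔼 i ∈ s, F i (n - m) = 𝔼 i ∈ s, conv (F i) k n := by
  simp only [Finset.expect_eq_sum_div_card, conv_eq_tsum_mul_sub, mul_div_assoc', Finset.mul_sum,
    tsum_div_const]
  rw [Summable.tsum_finsetSum fun i hi => summable_mul_sub k (hF i hi) n]

end ZRiesz

namespace FlowTree

open ZRiesz

variable {q : ℕ} (S : FlowTree q)

lemma level_iterate_pred (j : ℕ) (v : S.V) : S.level (S.pred^[j] v) = S.level v + j := by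
  induction j with
  | zero => simp
  | succ j ih => rw [iterate_succ_apply', S.level_pred, ih]; push_cast; ring

lemma iterate_pred_injective (v : S.V) : Injective fun j => S.pred^[j] v := by
  intro i j hij
  have := congrArg S.level hij
  simp only [level_iterate_pred] at this
  omega

/-- The successors `succ(x)`. -/
noncomputable def succs (x : S.V) : Finset S.V := (S.succ_finite x).toFinset

lemma mem_succs {x y : S.V} : y ∈ S.succs x ↔ S.pred y = x := by simp [succs]

lemma card_succs (x : S.V) : (S.succs x).card = q := by
  rw [succs, ← Set.ncard_eq_toFinset_card _ (S.succ_finite x)]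
  exact S.succ_card x

lemma branching_ne_zero (x : S.V) : q ≠ 0 := by
  rw [← S.card_succs (S.pred x)]
  exact Finset.card_ne_zero_of_mem (S.mem_succs.2 rfl)

/-- The descendants of `x` lying `j` generations below it. -/
noncomputable def descendants : ℕ → S.V → Finset S.V
  | 0, x => {x}
  | j + 1, x => (S.succs x).biUnion (descendants j)

lemma mem_descendants {j : ℕ} {x v : S.V} : v ∈ S.descendants j x ↔ S.pred^[j] v = x := by
  induction j generalizing x with
  | zero => simp [descendants]
  | succ j ih => simp [descendants, ih, mem_succs, iterate_succ_apply']

lemma sum_descendants_succ {M : Type*} [AddCommMonoid M] (j : ℕ) (x : S.V) (g : S.V → M) :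
    ∑ v ∈ S.descendants (j + 1) x, g v = ∑ y ∈ S.succs x, ∑ v ∈ S.descendants j y, g v := by
  rw [descendants, Finset.sum_biUnion]
  refine fun y _ z _ hyz => Finset.disjoint_left.2 fun v hy hz => hyz ?_
  rw [← S.mem_descendants.1 hy, ← S.mem_descendants.1 hz]

lemma card_descendants (j : ℕ) (x : S.V) : (S.descendants j x).card = q ^ j := by
  induction j generalizing x with
  | zero => simp [descendants]
  | succ j ih =>
    simp only [Finset.card_eq_sum_ones] at ih
    rw [Finset.card_eq_sum_ones, sum_descendants_succ]
    simp only [ih, Finset.sum_const, card_succs, smul_eq_mul, pow_succ']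

lemma sig_iterate_apply (j : ℕ) (f : S.V → ℂ) (x : S.V) : S.sig^[j] f x = f (S.pred^[j] x) := by
  induction j generalizing x with
  | zero => rfl
  | succ j ih => rw [iterate_succ_apply', sig, ih, iterate_succ_apply]

lemma sigStar_apply (f : S.V → ℂ) (x : S.V) :
    S.sigStar f x = 𝔼 y ∈ S.succs x, f y := by
  have hsucc : {y | S.pred y = x} = ↑(S.succs x) := by ext; simp [mem_succs]
  rw [sigStar, hsucc, Finset.tsum_subtype', Finset.expect_eq_sum_div_card, card_succs,
    div_eq_inv_mul]

lemma sigStar_iterate_apply (j : ℕ) (f : S.V → ℂ) (x : S.V) :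
    S.sigStar^[j] f x = 𝔼 v ∈ S.descendants j x, f v := by
  induction j generalizing x with
  | zero => simp [descendants]
  | succ j ih =>
    rw [iterate_succ_apply', sigStar_apply]
    simp only [ih, Finset.expect_eq_sum_div_card, card_descendants, card_succs,
      sum_descendants_succ, ← Finset.sum_div, div_div, Nat.cast_pow, pow_succ, Nat.cast_mul]

lemma leftInverse_sigStar_sig : LeftInverse S.sigStar S.sig := by
  intro f
  funext x
  have hne : (S.succs x).Nonempty := by
    rw [← Finset.card_ne_zero, card_succs]
    exact S.branching_ne_zero x
  calc S.sigStar (S.sig f) x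
      = 𝔼 y ∈ S.succs x, f (S.pred y) := S.sigStar_apply _ x
    _ = 𝔼 _y ∈ S.succs x, f x :=
        Finset.expect_congr rfl fun y hy => by rw [S.mem_succs.1 hy]
    _ = f x := Finset.expect_const hne _

lemma sigStar_iterate_sig_iterate (i j : ℕ) (f : S.V → ℂ) :
    S.sigStar^[j] (S.sig^[i] f) = S.sigTilde (i - j) f := by
  rw [sigTilde]
  split_ifs with h
  · have hi : i = j + ((i : ℤ) - j).toNat := by omega
    conv_lhs => rw [hi, iterate_add_apply, S.leftInverse_sigStar_sig.iterate j]
  · have hj : j = (-((i : ℤ) - j)).toNat + i := by omega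
    conv_lhs => rw [hj, iterate_add_apply, S.leftInverse_sigStar_sig.iterate i]

/-- The values of `f` along the ray `v, 𝔭(v), 𝔭²(v), …`, extended by zero to the negative
integers. -/
noncomputable def ray (f : S.V → ℂ) (v : S.V) : ℤ → ℂ :=
  extend ((↑) : ℕ → ℤ) (fun j => f (S.pred^[j] v)) 0

lemma ray_natCast (f : S.V → ℂ) (v : S.V) (j : ℕ) : S.ray f v j = f (S.pred^[j] v) :=
  Nat.cast_injective.extend_apply _ _ j

lemma ray_of_neg (f : S.V → ℂ) (v : S.V) {n : ℤ} (hn : n < 0) : S.ray f v n = 0 :=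
  extend_apply' _ _ _ fun ⟨_, _⟩ => by omega

lemma finite_support_ray {f : S.V → ℂ} (hf : (support f).Finite) (v : S.V) :
    (support (S.ray f v)).Finite := by
  rw [ray, support_extend_zero Nat.cast_injective]
  exact (hf.preimage (S.iterate_pred_injective v).injOn).image _

lemma iSup_enorm_ray_le (f : S.V → ℂ) (v : S.V) : ⨆ n, ‖S.ray f v n‖ₑ ≤ ⨆ x, ‖f x‖ₑ := by
  refine iSup_le fun n => ?_
  obtain hn | hn := lt_or_ge n 0
  · simp [S.ray_of_neg f v hn]
  · lift n to ℕ using hn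
    rw [ray_natCast]
    exact le_iSup (fun x => ‖f x‖ₑ) _

lemma tsum_enorm_ray_rpow (f : S.V → ℂ) (v : S.V) {r : ℝ} (hr : 0 < r) :
    ∑' n : ℤ, ‖S.ray f v n‖ₑ ^ r = ∑' j : ℕ, ‖f (S.pred^[j] v)‖ₑ ^ r := by
  simp only [← ray_natCast]
  refine (Nat.cast_injective.tsum_eq fun n hn => ?_).symm
  by_contra hneg
  refine hn ?_
  dsimp only
  rw [S.ray_of_neg f v (not_le.1 fun h => hneg ⟨n.toNat, Int.toNat_of_nonneg h⟩), enorm_zero,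
    ENNReal.zero_rpow_of_pos hr]

lemma tsum_enorm_conv_ray_rpow_le {r : ℝ} (hr : 0 < r) {k : ℤ → ℂ} {C : ℝ≥0∞}
    (hk : ∀ F : ℤ → ℂ, (support F).Finite →
      ∑' n, ‖conv F k n‖ₑ ^ r ≤ C * ∑' n, ‖F n‖ₑ ^ r)
    {f : S.V → ℂ} (hf : (support f).Finite) (v : S.V) :
    ∑' j : ℕ, ‖conv (S.ray f v) k j‖ₑ ^ r ≤ C * ∑' j : ℕ, ‖f (S.pred^[j] v)‖ₑ ^ r :=
  calc ∑' j : ℕ, ‖conv (S.ray f v) k j‖ₑ ^ r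
      ≤ ∑' n : ℤ, ‖conv (S.ray f v) k n‖ₑ ^ r :=
        ENNReal.tsum_comp_le_tsum_of_injective Nat.cast_injective
          fun n : ℤ => ‖conv (S.ray f v) k n‖ₑ ^ r
    _ ≤ C * ∑' n : ℤ, ‖S.ray f v n‖ₑ ^ r := hk _ (S.finite_support_ray hf v)
    _ = C * ∑' j : ℕ, ‖f (S.pred^[j] v)‖ₑ ^ r := by rw [S.tsum_enorm_ray_rpow f v hr]

lemma sigTilde_neg_eq_expect_ray {f : S.V → ℂ} {a : ℤ} (ha : ∀ y ∈ support f, a ≤ S.level y)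
    {x : S.V} {j : ℕ} (hx : S.level x = a + j) (n : ℤ) :
    S.sigTilde (-n) f x = 𝔼 v ∈ S.descendants j x, S.ray f v (j - n) := by
  obtain hn | hn := le_or_gt n j
  · obtain ⟨i, hi⟩ := Int.eq_ofNat_of_zero_le (sub_nonneg.2 hn)
    calc S.sigTilde (-n) f x
        = S.sigStar^[j] (S.sig^[i] f) x := by
          rw [sigStar_iterate_sig_iterate]
          congr 2
          omega
      _ = 𝔼 v ∈ S.descendants j x, S.ray f v (j - n) := by
          simp only [sigStar_iterate_apply, sig_iterate_apply, hi, ray_natCast]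
  · lift n to ℕ using by omega
    have hbelow : ∀ v ∈ S.descendants n x, f v = 0 := by
      intro v hv
      by_contra hfv
      have hlevel := S.level_iterate_pred n v
      rw [S.mem_descendants.1 hv] at hlevel
      have := ha v hfv
      omega
    calc S.sigTilde (-n) f x
        = S.sigStar^[n] (S.sig^[0] f) x := by rw [sigStar_iterate_sig_iterate]; simp
      _ = 0 := by rw [sigStar_iterate_apply, iterate_zero_apply, Finset.expect_eq_zero hbelow]
      _ = 𝔼 v ∈ S.descendants j x, S.ray f v (j - n) :=
          (Finset.expect_eq_zero fun v _ => S.ray_of_neg f v (by omega)).symm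

/-- The operator `𝒦 = Σ_{n ∈ ℤ} k(n) Σ̃_{-n}` transferred from the convolution by `k` on `ℤ`. -/
noncomputable def transfer (k : ℤ → ℂ) (f : S.V → ℂ) (x : S.V) : ℂ :=
  ∑' n : ℤ, k n * S.sigTilde (-n) f x

lemma transfer_eq_expect_conv_ray (k : ℤ → ℂ) {f : S.V → ℂ} (hf : (support f).Finite) {a : ℤ}
    (ha : ∀ y ∈ support f, a ≤ S.level y) {x : S.V} {j : ℕ} (hx : S.level x = a + j) :
    S.transfer k f x = 𝔼 v ∈ S.descendants j x, conv (S.ray f v) k j := by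
  simp only [transfer, S.sigTilde_neg_eq_expect_ray ha hx]
  exact tsum_mul_expect_sub _ k (fun v _ => S.finite_support_ray hf v) j

lemma exists_le_level {s : Set S.V} (hs : s.Finite) : ∃ a, ∀ x ∈ s, a ≤ S.level x := by
  obtain ⟨a, ha⟩ := (hs.image S.level).bddBelow
  exact ⟨a, fun x hx => ha ⟨x, hx, rfl⟩⟩

lemma enorm_transfer_le {k : ℤ → ℂ} {C : ℝ≥0∞}
    (hk : ∀ F : ℤ → ℂ, (support F).Finite → ⨆ n, ‖conv F k n‖ₑ ≤ C * ⨆ n, ‖F n‖ₑ)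
    {f : S.V → ℂ} (hf : (support f).Finite) (x : S.V) :
    ‖S.transfer k f x‖ₑ ≤ C * ⨆ y, ‖f y‖ₑ := by
  obtain ⟨a, ha⟩ := S.exists_le_level (hf.insert x)
  obtain ⟨j, hj⟩ := Int.eq_ofNat_of_zero_le (sub_nonneg.2 (ha x (mem_insert x _)))
  rw [S.transfer_eq_expect_conv_ray k hf (fun y hy => ha y (mem_insert_of_mem x hy))
    (eq_add_of_sub_eq' hj)]
  refine enorm_expect_le fun v _ => ?_
  calc ‖conv (S.ray f v) k j‖ₑ
      ≤ ⨆ n, ‖conv (S.ray f v) k n‖ₑ := le_iSup (fun n => ‖conv (S.ray f v) k n‖ₑ) j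
    _ ≤ C * ⨆ n, ‖S.ray f v n‖ₑ := hk _ (S.finite_support_ray hf v)
    _ ≤ C * ⨆ y, ‖f y‖ₑ := by gcongr; exact S.iSup_enorm_ray_le f v

/-- The horocycle of level `n`. -/
def horocycle (n : ℤ) : Set S.V := {x | S.level x = n}

lemma tsum_horocycle_add_nat (a : ℤ) (G : S.V → ℝ≥0∞) :
    ∑' j : ℕ, ∑' x : S.horocycle (a + j), G x = ∑' x : {x | a ≤ S.level x}, G x := by
  have hunion : {x | a ≤ S.level x} = ⋃ j : ℕ, S.horocycle (a + j) := by
    ext x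
    simp only [horocycle, mem_ofPred_eq, mem_iUnion]
    exact ⟨fun h => ⟨(S.level x - a).toNat, by omega⟩, fun ⟨j, hj⟩ => by omega⟩
  rw [hunion, ENNReal.tsum_biUnion]
  refine fun i _ j _ hij => Set.disjoint_left.2 fun x hi hj => hij ?_
  simp only [horocycle, mem_ofPred_eq] at hi hj
  omega

lemma tsum_sum_descendants (j : ℕ) (φ : S.V → ℝ≥0∞) :
    ∑' x, ∑ v ∈ S.descendants j x, φ v = ∑' v, φ v := by
  rw [← ENNReal.tsum_fiberwise φ S.pred^[j]]
  refine tsum_congr fun x => ?_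
  have hfiber : S.pred^[j] ⁻¹' {x} = ↑(S.descendants j x) := by ext; simp [mem_descendants]
  rw [hfiber, Finset.tsum_subtype']

lemma tsum_horocycle_sum_descendants (a : ℤ) (j : ℕ) (φ : S.V → ℝ≥0∞) :
    ∑' x : S.horocycle (a + j), ∑ v ∈ S.descendants j x, φ v = ∑' v : S.horocycle a, φ v := by
  rw [tsum_subtype (S.horocycle a) φ, ← S.tsum_sum_descendants j,
    tsum_subtype (S.horocycle (a + j)) fun x => ∑ v ∈ S.descendants j x, φ v]
  refine tsum_congr fun x => ?_
  have hlevel : ∀ v ∈ S.descendants j x, v ∈ S.horocycle a ↔ x ∈ S.horocycle (a + j) := by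
    intro v hv
    simp only [horocycle, mem_ofPred_eq, ← S.mem_descendants.1 hv, level_iterate_pred]
    omega
  by_cases hx : x ∈ S.horocycle (a + j)
  · rw [indicator_of_mem hx]
    exact Finset.sum_congr rfl fun v hv => (indicator_of_mem ((hlevel v hv).2 hx) φ).symm
  · rw [indicator_of_notMem hx]
    exact (Finset.sum_eq_zero fun v hv =>
      indicator_of_notMem (fun h => hx ((hlevel v hv).1 h)) φ).symm

lemma w_of_mem_horocycle {x : S.V} {a : ℤ} {j : ℕ} (hx : x ∈ S.horocycle (a + j)) :
    S.w x = (q : ℝ≥0∞) ^ (a : ℝ) * (S.descendants j x).card := by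
  rw [w, show S.level x = a + j from hx, Int.cast_add, Int.cast_natCast,
    ENNReal.rpow_add _ _ (by exact_mod_cast S.branching_ne_zero x) (ENNReal.natCast_ne_top q),
    ENNReal.rpow_natCast, card_descendants, Nat.cast_pow]

lemma tsum_horocycle_mul_w (a : ℤ) (j : ℕ) (G : S.V → ℝ≥0∞) :
    ∑' x : S.horocycle (a + j), G x * S.w x =
      (q : ℝ≥0∞) ^ (a : ℝ) * ∑' v : S.horocycle a, G (S.pred^[j] v) := by
  rw [← S.tsum_horocycle_sum_descendants a j fun v => G (S.pred^[j] v), ← ENNReal.tsum_mul_left]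
  refine tsum_congr fun x => ?_
  rw [Finset.sum_congr rfl fun v hv => congrArg G (S.mem_descendants.1 hv), Finset.sum_const,
    nsmul_eq_mul, S.w_of_mem_horocycle x.2]
  ring

lemma tsum_horocycle_enorm_transfer_rpow_le {r : ℝ} (hr : 1 ≤ r) (k : ℤ → ℂ) {f : S.V → ℂ}
    (hf : (support f).Finite) {a : ℤ} (ha : ∀ y ∈ support f, a ≤ S.level y) (j : ℕ) :
    ∑' x : S.horocycle (a + j), ‖S.transfer k f x‖ₑ ^ r * S.w x ≤
      (q : ℝ≥0∞) ^ (a : ℝ) * ∑' v : S.horocycle a, ‖conv (S.ray f v) k j‖ₑ ^ r := by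
  rw [← S.tsum_horocycle_sum_descendants a j fun v => ‖conv (S.ray f v) k j‖ₑ ^ r,
    ← ENNReal.tsum_mul_left]
  refine ENNReal.tsum_le_tsum fun x => ?_
  rw [S.transfer_eq_expect_conv_ray k hf ha x.2, S.w_of_mem_horocycle x.2, mul_left_comm,
    mul_comm (_ ^ r)]
  gcongr
  exact card_mul_enorm_expect_rpow_le _ _ hr

lemma tsum_above_enorm_transfer_rpow_le {r : ℝ} (hr : 1 ≤ r) {k : ℤ → ℂ} {C : ℝ≥0∞}
    (hk : ∀ F : ℤ → ℂ, (support F).Finite →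
      ∑' n, ‖conv F k n‖ₑ ^ r ≤ C * ∑' n, ‖F n‖ₑ ^ r)
    {f : S.V → ℂ} (hf : (support f).Finite) {a : ℤ} (ha : ∀ y ∈ support f, a ≤ S.level y) :
    ∑' x : {x | a ≤ S.level x}, ‖S.transfer k f x‖ₑ ^ r * S.w x ≤
      C * ∑' x, ‖f x‖ₑ ^ r * S.w x := by
  calc ∑' x : {x | a ≤ S.level x}, ‖S.transfer k f x‖ₑ ^ r * S.w x
      = ∑' j : ℕ, ∑' x : S.horocycle (a + j), ‖S.transfer k f x‖ₑ ^ r * S.w x :=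
        (S.tsum_horocycle_add_nat a fun x => ‖S.transfer k f x‖ₑ ^ r * S.w x).symm
    _ ≤ ∑' j : ℕ, (q : ℝ≥0∞) ^ (a : ℝ) *
          ∑' v : S.horocycle a, ‖conv (S.ray f v) k j‖ₑ ^ r :=
        ENNReal.tsum_le_tsum fun j => S.tsum_horocycle_enorm_transfer_rpow_le hr k hf ha j
    _ = (q : ℝ≥0∞) ^ (a : ℝ) *
          ∑' v : S.horocycle a, ∑' j : ℕ, ‖conv (S.ray f v) k j‖ₑ ^ r := by
        rw [ENNReal.tsum_mul_left, ENNReal.tsum_comm]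
    _ ≤ (q : ℝ≥0∞) ^ (a : ℝ) *
          ∑' v : S.horocycle a, C * ∑' j : ℕ, ‖f (S.pred^[j] v)‖ₑ ^ r := by
        gcongr with v
        exact S.tsum_enorm_conv_ray_rpow_le (zero_lt_one.trans_le hr) hk hf v
    _ = C * ∑' j : ℕ, ∑' x : S.horocycle (a + j), ‖f x‖ₑ ^ r * S.w x := by
        simp only [S.tsum_horocycle_mul_w a _ fun x => ‖f x‖ₑ ^ r, ENNReal.tsum_mul_left]
        rw [ENNReal.tsum_comm, mul_left_comm]
    _ ≤ C * ∑' x, ‖f x‖ₑ ^ r * S.w x := by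
        rw [S.tsum_horocycle_add_nat a fun x => ‖f x‖ₑ ^ r * S.w x]
        gcongr
        exact ENNReal.tsum_comp_le_tsum_of_injective Subtype.val_injective _

lemma tsum_enorm_transfer_rpow_le {r : ℝ} (hr : 1 ≤ r) {k : ℤ → ℂ} {C : ℝ≥0∞}
    (hk : ∀ F : ℤ → ℂ, (support F).Finite →
      ∑' n, ‖conv F k n‖ₑ ^ r ≤ C * ∑' n, ‖F n‖ₑ ^ r)
    {f : S.V → ℂ} (hf : (support f).Finite) :
    ∑' x, ‖S.transfer k f x‖ₑ ^ r * S.w x ≤ C * ∑' x, ‖f x‖ₑ ^ r * S.w x := by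
  rw [ENNReal.tsum_eq_iSup_sum]
  refine iSup_le fun s => ?_
  obtain ⟨a, ha⟩ := S.exists_le_level (s.finite_toSet.union hf)
  calc ∑ x ∈ s, ‖S.transfer k f x‖ₑ ^ r * S.w x
      = ∑' x : (s : Set S.V), ‖S.transfer k f x‖ₑ ^ r * S.w x :=
        (Finset.tsum_subtype' s _).symm
    _ ≤ ∑' x : {x | a ≤ S.level x}, ‖S.transfer k f x‖ₑ ^ r * S.w x :=
        ENNReal.tsum_mono_subtype (fun x => ‖S.transfer k f x‖ₑ ^ r * S.w x)
          fun x hx => ha x (.inl hx)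
    _ ≤ C * ∑' x, ‖f x‖ₑ ^ r * S.w x :=
        S.tsum_above_enorm_transfer_rpow_le hr hk hf fun y hy => ha y (.inr hy)

end FlowTree

open ZRiesz in
/-- transference: if `k ∈ Cv^p(ℤ)` then `𝒦 = Σ_{n∈ℤ} k(n) Σ̃_{−n}` is bounded
on `L^p(μ)` with norm at most `‖k‖_{Cv^p}` (i.e. any convolutor bound `C` for `k` on
`ℓ^p(ℤ)` is a bound for `𝒦` on `L^p(μ)`). -/
theorem transference_convolutor {q : ℕ} (hq : 2 ≤ q) (S : FlowTree q)
    (p : ℝ≥0∞) (hp : 1 ≤ p) (k : ℤ → ℂ) (C : ℝ≥0∞)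
    (hk : ∀ F : ℤ → ℂ, (Function.support F).Finite →
      zlpNorm p (fun n => ∑' m : ℤ, F m * k (n - m)) ≤ C * zlpNorm p F) :
    ∀ f : S.V → ℂ, (Function.support f).Finite →
      S.lpNorm p (fun x => ∑' n : ℤ, k n * S.sigTilde (-n) f x) ≤ C * S.lpNorm p f := by
  intro f hf
  obtain rfl | hp_top := eq_or_ne p ∞
  · simp only [FlowTree.lpNorm, zlpNorm, if_true, ← enorm_eq_nnnorm] at hk ⊢
    exact iSup_le fun x => S.enorm_transfer_le hk hf x
  · have hr : 1 ≤ p.toReal := by simpa using ENNReal.toReal_mono hp_top hp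
    simp only [FlowTree.lpNorm, zlpNorm, if_neg hp_top, ← enorm_eq_nnnorm,
      rpow_one_div_le_mul_rpow_one_div_iff (zero_lt_one.trans_le hr)] at hk ⊢
    exact S.tsum_enorm_transfer_rpow_le hr hk hf
end
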